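/- With v = (2/9)a³ − ab − 3c, there exist nonzero rational numbers C, C₁, C₂ such that, in U(𝔤), modulo the left ideal U(𝔤)𝔫₊: (E₂₁³F₂₁⁶)_L(v) ≡ C·((2/9)H₂₁(H₂₁−1)(H₂₁−2) + H₂₁(H₂₁−2) + 3H₀₁(H₀₁+2)); (E₁₀³F₃₁³)_L(v) ≡ C₁·H₁₀(H₁₀−1)(H₁₀−2); (E₁₁³F₃₂³)_L(v) ≡ C₂·((2/9)H₁₁(H₁₁−1)(H₁₁−2) + 6H₀₁H₃₂). -/

import Mathlib

/-- The canonical embedding of a Lie algebra into its universal enveloping algebra. -/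
noncomputable def ιU {L : Type*} [LieRing L] [LieAlgebra ℂ L] (x : L) :
    UniversalEnvelopingAlgebra ℂ L :=
  UniversalEnvelopingAlgebra.ι ℂ x

/-- The adjoint action `X_L : f ↦ Xf − fX` of `X ∈ L` on `U(L)`. -/
noncomputable def adU {L : Type*} [LieRing L] [LieAlgebra ℂ L] (x : L)
    (f : UniversalEnvelopingAlgebra ℂ L) : UniversalEnvelopingAlgebra ℂ L :=
  ιU x * f - f * ιU x

/-- A Lie algebra over `ℂ` equipped with Chevalley generators of type `G₂`:
`E₁₀, F₁₀, H₁₀` correspond to the short simple root `α` and `E₀₁, F₀₁, H₀₁` to the long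
simple root `β`, subject to the Chevalley relations and the Serre relations, and the
generators generate the Lie algebra.  (By Serre's theorem such a Lie algebra is a quotient of
the simple Lie algebra of type `G₂`.) -/
structure G2Gens (L : Type*) [LieRing L] [LieAlgebra ℂ L] where
  E10 : L
  E01 : L
  F10 : L
  F01 : L
  H10 : L
  H01 : L
  hH10H01 : ⁅H10, H01⁆ = 0
  hE10F10 : ⁅E10, F10⁆ = H10
  hE01F01 : ⁅E01, F01⁆ = H01
  hE10F01 : ⁅E10, F01⁆ = 0
  hE01F10 : ⁅E01, F10⁆ = 0
  hH10E10 : ⁅H10, E10⁆ = (2 : ℂ) • E10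
  hH01E01 : ⁅H01, E01⁆ = (2 : ℂ) • E01
  hH10E01 : ⁅H10, E01⁆ = (-3 : ℂ) • E01
  hH01E10 : ⁅H01, E10⁆ = (-1 : ℂ) • E10
  hH10F10 : ⁅H10, F10⁆ = (-2 : ℂ) • F10
  hH01F01 : ⁅H01, F01⁆ = (-2 : ℂ) • F01
  hH10F01 : ⁅H10, F01⁆ = (3 : ℂ) • F01
  hH01F10 : ⁅H01, F10⁆ = (1 : ℂ) • F10
  serreE1 : ⁅E10, ⁅E10, ⁅E10, ⁅E10, E01⁆⁆⁆⁆ = 0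
  serreE2 : ⁅E01, ⁅E01, E10⁆⁆ = 0
  serreF1 : ⁅F10, ⁅F10, ⁅F10, ⁅F10, F01⁆⁆⁆⁆ = 0
  serreF2 : ⁅F01, ⁅F01, F10⁆⁆ = 0
  generates : LieSubalgebra.lieSpan ℂ L {E10, E01, F10, F01, H10, H01} = ⊤

namespace G2Gens

variable {L : Type*} [LieRing L] [LieAlgebra ℂ L] (g : G2Gens L)

/-- The root vector `E₁₁ = [E₁₀, E₀₁]`. -/
def E11 : L := ⁅g.E10, g.E01⁆
/-- The root vector `E₂₁ = (1/2)[E₁₁, E₁₀]`. -/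
noncomputable def E21 : L := (2 : ℂ)⁻¹ • ⁅g.E11, g.E10⁆
/-- The root vector `E₃₁ = (1/3)[E₂₁, E₁₀]`. -/
noncomputable def E31 : L := (3 : ℂ)⁻¹ • ⁅g.E21, g.E10⁆
/-- The root vector `E₃₂ = [E₃₁, E₀₁]`. -/
noncomputable def E32 : L := ⁅g.E31, g.E01⁆
/-- The root vector `F₁₁ = [F₀₁, F₁₀]`. -/
def F11 : L := ⁅g.F01, g.F10⁆
/-- The root vector `F₂₁ = (1/2)[F₁₀, F₁₁]`. -/
noncomputable def F21 : L := (2 : ℂ)⁻¹ • ⁅g.F10, g.F11⁆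
/-- The root vector `F₃₁ = (1/3)[F₁₀, F₂₁]`. -/
noncomputable def F31 : L := (3 : ℂ)⁻¹ • ⁅g.F10, g.F21⁆
/-- The root vector `F₃₂ = [F₀₁, F₃₁]`. -/
noncomputable def F32 : L := ⁅g.F01, g.F31⁆
/-- The coroot `H₁₁ = H₁₀ + 3H₀₁`. -/
def H11 : L := g.H10 + (3 : ℂ) • g.H01
/-- The coroot `H₂₁ = 2H₁₀ + 3H₀₁`. -/
def H21 : L := (2 : ℂ) • g.H10 + (3 : ℂ) • g.H01
/-- The coroot `H₃₁ = H₁₀ + H₀₁`. -/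
def H31 : L := g.H10 + g.H01
/-- The coroot `H₃₂ = H₁₀ + 2H₀₁`. -/
def H32 : L := g.H10 + (2 : ℂ) • g.H01

/-- The element `a = E₂₁` of `U(𝔤)`. -/
noncomputable def aU : UniversalEnvelopingAlgebra ℂ L := ιU g.E21
/-- The element `b = E₃₁E₁₁ − E₃₂E₁₀` of `U(𝔤)`. -/
noncomputable def bU : UniversalEnvelopingAlgebra ℂ L :=
  ιU g.E31 * ιU g.E11 - ιU g.E32 * ιU g.E10
/-- The element `c = E₃₁²E₀₁ − E₃₂E₃₁H₀₁ − E₃₂²F₀₁` of `U(𝔤)`. -/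
noncomputable def cU : UniversalEnvelopingAlgebra ℂ L :=
  ιU g.E31 * ιU g.E31 * ιU g.E01 - ιU g.E32 * ιU g.E31 * ιU g.H01
    - ιU g.E32 * ιU g.E32 * ιU g.F01
/-- The element `u = (1/3)a² − b` of `U(𝔤)`. -/
noncomputable def uU : UniversalEnvelopingAlgebra ℂ L :=
  (3 : ℂ)⁻¹ • (g.aU * g.aU) - g.bU
/-- The element `v = (2/9)a³ − ab − 3c` of `U(𝔤)`. -/
noncomputable def vU : UniversalEnvelopingAlgebra ℂ L :=
  ((2 : ℂ) / 9) • (g.aU * g.aU * g.aU) - g.aU * g.bU - (3 : ℂ) • g.cU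

/-- `f ≡ h (mod U(𝔤)𝔫₊)`:  `f − h` lies in the left ideal of `U(𝔤)` generated by `E₁₀`
and `E₀₁`. -/
def EqModN (f h : UniversalEnvelopingAlgebra ℂ L) : Prop :=
  ∃ A B : UniversalEnvelopingAlgebra ℂ L, f - h = A * ιU g.E10 + B * ιU g.E01

end G2Gens

/-!
Every `X_L` is a derivation of `U(𝔤)`, so if the string `f, X_L f, X_L² f, …` ends after `m` steps
in `s` and that of `f'` after `n` steps in `s'`, then by Leibniz' rule that of `f f'` ends after
`m + n` steps in `(m + n).choose m • s s'`. Applied to the products of root vectors that make up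
`a`, `b` and `c`, this gives `F_L^{3k} v` in closed form for `F = F₂₁, F₃₁, F₃₂`.

A congruence modulo `U(𝔤)𝔫₊` is an equality of actions on singular vectors `m`, and there
`(E_L^n f) m = E^n f m` since `E m = 0`. The ends of the strings of `a` are multiples of `F₂₁`,
`F₁₀` and `F₁₁`, opposite to the respective `E = E₂₁, E₁₀, E₁₁`, so `a³` contributes a multiple of
the `sl₂` value `3! H (H - 1) (H - 2) m`. For `b` and `c`, commuting one `E` at a time to the right
leaves polynomials in the Cartan subalgebra of degree at most two.
-/

section StringEnd

variable {R M N A : Type*} [CommRing R] [AddCommGroup M] [Module R M] [AddCommGroup N] [Module R N]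
  [Ring A] [Algebra R A]

/-- The string `a, D a, D² a, …` ends after `n` steps in the vector `t`, which `D` kills. The value
`t = 0` is allowed, so `n` need not be the exact length of the string. -/
structure IsStringEnd (D : Module.End R M) (n : ℕ) (a t : M) : Prop where
  iterate_apply : D^[n] a = t
  apply_end : D t = 0

namespace IsStringEnd

variable {D : Module.End R M} {n : ℕ} {a b s t : M}

lemma congr_end (ha : IsStringEnd D n a s) (h : s = t) : IsStringEnd D n a t :=
  h ▸ ha

lemma iterate_eq_zero (ha : IsStringEnd D n a t) {k : ℕ} (hk : n < k) : D^[k] a = 0 := by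
  obtain ⟨j, rfl⟩ := Nat.exists_eq_add_of_lt hk
  rw [show n + j + 1 = j + (n + 1) by omega, Function.iterate_add_apply,
    Function.iterate_succ_apply', ha.iterate_apply, ha.apply_end, iterate_map_zero]

lemma sub (ha : IsStringEnd D n a s) (hb : IsStringEnd D n b t) :
    IsStringEnd D n (a - b) (s - t) where
  iterate_apply := by rw [iterate_map_sub, ha.iterate_apply, hb.iterate_apply]
  apply_end := by rw [map_sub, ha.apply_end, hb.apply_end, sub_zero]

lemma map {D' : Module.End R N} (ha : IsStringEnd D n a t) (f : M →ₗ[R] N)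
    (hf : ∀ x, f (D x) = D' (f x)) : IsStringEnd D' n (f a) (f t) where
  iterate_apply := by rw [← ha.iterate_apply, Function.Semiconj.iterate_right hf n a]
  apply_end := by rw [← hf, ha.apply_end, map_zero]

lemma smul (c : R) (ha : IsStringEnd D n a t) : IsStringEnd D n (c • a) (c • t) :=
  ha.map (LinearMap.lsmul R M c) fun x ↦ (map_smul D c x).symm

end IsStringEnd

open Finset in
lemma iterate_map_mul_of_leibniz {D : Module.End R A} (hD : ∀ a b, D (a * b) = D a * b + a * D b)
    (n : ℕ) (a b : A) :
    D^[n] (a * b) = ∑ ij ∈ antidiagonal n, n.choose ij.1 • (D^[ij.1] a * D^[ij.2] b) := by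
  induction n with
  | zero => simp
  | succ n ih =>
    rw [sum_antidiagonal_choose_succ_nsmul (M := A) (fun i j ↦ D^[i] a * D^[j] b) n]
    simp only [Function.iterate_succ_apply', ih, map_sum, map_nsmul, hD, smul_add,
      sum_add_distrib, add_comm]
    congr 1
    refine sum_congr rfl fun ⟨i, j⟩ hij ↦ ?_
    rw [n.choose_symm_of_eq_add (mem_antidiagonal.1 hij).symm]

open Finset in
lemma IsStringEnd.mul {D : Module.End R A} (hD : ∀ a b, D (a * b) = D a * b + a * D b)
    {m n : ℕ} {a b s t : A} (ha : IsStringEnd D m a s) (hb : IsStringEnd D n b t) :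
    IsStringEnd D (m + n) (a * b) ((m + n).choose m • (s * t)) where
  iterate_apply := by
    rw [iterate_map_mul_of_leibniz hD, sum_eq_single (m, n), ha.iterate_apply, hb.iterate_apply]
    · rintro ⟨i, j⟩ hij hne
      obtain hi | hj : m < i ∨ n < j := by
        have := mem_antidiagonal.1 hij
        grind
      · rw [ha.iterate_eq_zero hi, zero_mul, smul_zero]
      · rw [hb.iterate_eq_zero hj, mul_zero, smul_zero]
    · simp
  apply_end := by
    rw [map_nsmul, hD, ha.apply_end, hb.apply_end, zero_mul, mul_zero, add_zero, smul_zero]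

end StringEnd

section SlTwo

open Polynomial

variable {A M : Type*} [Ring A] [AddCommGroup M] [Module A M] {e f h : A}

lemma pow_succ_mul_of_lie_eq (hef : ⁅e, f⁆ = h) (hhe : ⁅h, e⁆ = 2 • e) (n : ℕ) :
    e ^ (n + 1) * f = f * e ^ (n + 1) + (n + 1) • ((h - n) * e ^ n) := by
  have hef' : e * f = f * e + h := by rw [← hef, Ring.lie_def]; abel
  induction n with
  | zero => simp [hef']
  | succ n ih =>
    have hhe' : e * (h - n) = (h - n - 2 • 1) * e := by
      have : e * h = h * e - 2 • e := by rw [← hhe, Ring.lie_def]; abel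
      rw [mul_sub, this, ← Nat.cast_comm]; noncomm_ring
    calc e ^ (n + 1 + 1) * f
        = e * f * e ^ (n + 1) + (n + 1) • (e * (h - n) * e ^ n) := by
          rw [pow_succ' e (n + 1), mul_assoc, ih, mul_add, mul_smul_comm, mul_assoc, mul_assoc]
      _ = f * e ^ (n + 1 + 1) + (h + (n + 1) • (h - n - 2 • 1)) * e ^ (n + 1) := by
          rw [hef', hhe', mul_assoc _ e, ← pow_succ', add_mul, mul_assoc, ← pow_succ', add_mul,
            smul_mul_assoc, add_assoc]
      _ = f * e ^ (n + 1 + 1) + (n + 1 + 1) • ((h - ↑(n + 1)) * e ^ (n + 1)) := by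
          rw [← smul_mul_assoc]
          congr 2
          simp only [← nsmul_one]
          module

lemma pow_succ_smul_smul_of_pow_succ_smul_eq_zero (hef : ⁅e, f⁆ = h) (hhe : ⁅h, e⁆ = 2 • e)
    {n : ℕ} {x : M} (hx : e ^ (n + 1) • x = 0) :
    e ^ (n + 1) • f • x = (n + 1) • (h - n) • e ^ n • x := by
  rw [← mul_smul, pow_succ_mul_of_lie_eq hef hhe, add_smul, mul_smul, hx, smul_zero, zero_add,
    smul_assoc, mul_smul]

lemma smul_aeval_smul_eq_zero (hhe : ⁅h, e⁆ = 2 • e) {m : M} (hm : e • m = 0) (p : ℤ[X]) :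
    e • aeval h p • m = 0 := by
  have he : e * h = h * e - 2 • e := by rw [← hhe, Ring.lie_def]; abel
  induction p using Polynomial.induction_on with
  | C a => rw [aeval_C, ← mul_smul, ← Algebra.commutes, mul_smul, hm, smul_zero]
  | add p q hp hq => rw [map_add, add_smul, smul_add, hp, hq, add_zero]
  | monomial n a ih =>
    rw [pow_succ, ← mul_assoc, mul_comm, map_mul, aeval_X, mul_smul, ← mul_smul e, he, sub_smul,
      mul_smul, smul_assoc, ih, smul_zero, smul_zero, sub_zero]

theorem pow_smul_pow_smul_of_smul_eq_zero (hef : ⁅e, f⁆ = h) (hhe : ⁅h, e⁆ = 2 • e) {m : M}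
    (hm : e • m = 0) (n : ℕ) :
    e ^ n • f ^ n • m = n.factorial • aeval h (descPochhammer ℤ n) • m := by
  induction n with
  | zero => simp
  | succ n ih =>
    have hx : e ^ (n + 1) • f ^ n • m = 0 := by
      rw [pow_succ', mul_smul, ih, smul_comm, smul_aeval_smul_eq_zero hhe hm, smul_zero]
    calc e ^ (n + 1) • f ^ (n + 1) • m
        = (n + 1) • (h - n) • e ^ n • f ^ n • m := by
          rw [pow_succ' f, mul_smul, pow_succ_smul_smul_of_pow_succ_smul_eq_zero hef hhe hx]
      _ = (n + 1).factorial • aeval h (descPochhammer ℤ (n + 1)) • m := by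
          rw [ih, smul_comm (h - n : A), smul_smul, ← mul_smul, Nat.factorial_succ,
            descPochhammer_succ_right, mul_comm (descPochhammer ℤ n), map_mul, map_sub, aeval_X,
            map_natCast]

end SlTwo

section Enveloping

variable {L : Type*} [LieRing L] [LieAlgebra ℂ L]

@[simp] lemma ιU_zero : ιU (0 : L) = 0 := map_zero _

@[simp] lemma ιU_add (x y : L) : ιU (x + y) = ιU x + ιU y := map_add _ x y

@[simp] lemma ιU_neg (x : L) : ιU (-x) = -ιU x := map_neg _ x

@[simp] lemma ιU_smul (c : ℂ) (x : L) : ιU (c • x) = c • ιU x := map_smul _ c x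

attribute [local instance] LieRing.ofAssociativeRing in
lemma ιU_lie (x y : L) : ιU ⁅x, y⁆ = ιU x * ιU y - ιU y * ιU x :=
  (UniversalEnvelopingAlgebra.ι ℂ).map_lie x y

lemma ιU_mul_ιU (x y : L) : ιU x * ιU y = ιU y * ιU x + ιU ⁅x, y⁆ := by
  rw [ιU_lie]; abel

lemma commute_ιU {x y : L} (h : ⁅x, y⁆ = 0) : Commute (ιU x) (ιU y) := by
  rw [commute_iff_eq, ← sub_eq_zero, ← ιU_lie, h, ιU_zero]

lemma lie_ιU {x y z : L} (h : ⁅x, y⁆ = z) : ⁅ιU x, ιU y⁆ = ιU z := by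
  rw [← h, ιU_lie, Ring.lie_def]

lemma lie_ιU_of_lie_eq_two_smul {x y : L} (h : ⁅x, y⁆ = (2 : ℂ) • y) :
    ⁅ιU x, ιU y⁆ = 2 • ιU y := by
  rw [lie_ιU h, ιU_smul, two_smul, two_smul]

/-- The inner derivation `X_L` as a linear endomorphism of `U(L)`; as a function it is `adU x`. -/
noncomputable def adULinear (x : L) : Module.End ℂ (UniversalEnvelopingAlgebra ℂ L) :=
  LinearMap.mulLeft ℂ (ιU x) - LinearMap.mulRight ℂ (ιU x)

lemma coe_adULinear (x : L) : ⇑(adULinear x) = adU x := rfl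

lemma adULinear_mul (x : L) (f h : UniversalEnvelopingAlgebra ℂ L) :
    adULinear x (f * h) = adULinear x f * h + f * adULinear x h := by
  simp only [coe_adULinear, adU]
  noncomm_ring

lemma adULinear_ιU (x y : L) : adULinear x (ιU y) = ιU ⁅x, y⁆ :=
  (ιU_lie x y).symm

attribute [local instance] LieRing.ofAssociativeRing in
lemma isStringEnd_ιU {x y z : L} {n : ℕ} (h : (LieAlgebra.ad ℂ L x)^[n] y = z) (hz : ⁅x, z⁆ = 0) :
    IsStringEnd (adULinear x) n (ιU y) (ιU z) :=
  IsStringEnd.map (D := LieAlgebra.ad ℂ L x) ⟨h, hz⟩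
    (UniversalEnvelopingAlgebra.ι ℂ : L →ₗ⁅ℂ⁆ UniversalEnvelopingAlgebra ℂ L).toLinearMap
    fun y ↦ (adULinear_ιU x y).symm

lemma IsStringEnd.ιU_mul {x : L} {m n : ℕ} {a b s t : UniversalEnvelopingAlgebra ℂ L}
    (ha : IsStringEnd (adULinear x) m a s) (hb : IsStringEnd (adULinear x) n b t) :
    IsStringEnd (adULinear x) (m + n) (a * b) (((m + n).choose m : ℂ) • (s * t)) := by
  rw [Nat.cast_smul_eq_nsmul]
  exact IsStringEnd.mul (adULinear_mul x) ha hb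

variable {M : Type*} [AddCommGroup M] [Module (UniversalEnvelopingAlgebra ℂ L) M]

lemma ιU_smul_ιU_smul (x y : L) (m : M) :
    ιU x • ιU y • m = ιU y • ιU x • m + ιU ⁅x, y⁆ • m := by
  rw [ιU_lie, sub_smul, mul_smul, mul_smul]; abel

lemma adU_iterate_smul {x : L} {m : M} (hx : ιU x • m = 0) (n : ℕ)
    (f : UniversalEnvelopingAlgebra ℂ L) : (adU x)^[n] f • m = ιU x ^ n • f • m := by
  induction n with
  | zero => simp
  | succ n ih =>
    rw [Function.iterate_succ_apply', adU, sub_smul, mul_smul, mul_smul, hx, smul_zero, sub_zero,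
      ih, pow_succ', mul_smul]

lemma ιU_smul_ιU_smul_of_eq_zero {x : L} {m : M} (hx : ιU x • m = 0) (y : L) :
    ιU x • ιU y • m = ιU ⁅x, y⁆ • m := by
  rw [ιU_smul_ιU_smul, hx, smul_zero, zero_add]

lemma ιU_lie_smul_eq_zero {x y : L} {m : M} (hx : ιU x • m = 0) (hy : ιU y • m = 0) :
    ιU ⁅x, y⁆ • m = 0 := by
  rw [← ιU_smul_ιU_smul_of_eq_zero hx, hy, smul_zero]

variable [Module ℂ M]

lemma ιU_pow_three_smul_pow_three_smul {e f h : L} (hef : ⁅e, f⁆ = h)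
    (hhe : ⁅h, e⁆ = (2 : ℂ) • e) {m : M} (hm : ιU e • m = 0) :
    ιU e ^ 3 • ιU f ^ 3 • m = (6 : ℂ) • (ιU h * (ιU h - 1) * (ιU h - 2)) • m := by
  rw [pow_smul_pow_smul_of_smul_eq_zero (lie_ιU hef) (lie_ιU_of_lie_eq_two_smul hhe) hm]
  simp [descPochhammer_succ_right, Nat.factorial, map_ofNat (Polynomial.aeval (ιU h)) 2,
    ofNat_smul_eq_nsmul ℂ]

lemma ιU_smul_smul [IsScalarTower ℂ (UniversalEnvelopingAlgebra ℂ L) M] (c : ℂ) (x : L) (m : M) :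
    ιU (c • x) • m = c • ιU x • m := by
  rw [ιU_smul, smul_assoc]

end Enveloping

namespace G2Gens

variable {L : Type*} [LieRing L] [LieAlgebra ℂ L] (g : G2Gens L)

/-- The Chevalley involution, as the same Lie algebra with the roles of the `Eᵢ` and `Fᵢ`
exchanged. It halves the computation of the structure constants. -/
def swap : G2Gens L where
  E10 := g.F10
  E01 := g.F01
  F10 := g.E10
  F01 := g.E01
  H10 := -g.H10
  H01 := -g.H01
  hH10H01 := by simp [g.hH10H01]
  hE10F10 := by rw [← lie_skew, g.hE10F10]
  hE01F01 := by rw [← lie_skew, g.hE01F01]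
  hE10F01 := by rw [← lie_skew, g.hE01F10, neg_zero]
  hE01F10 := by rw [← lie_skew, g.hE10F01, neg_zero]
  hH10E10 := by simp [g.hH10F10]
  hH01E01 := by simp [g.hH01F01]
  hH10E01 := by simp [g.hH10F01]
  hH01E10 := by simp [g.hH01F10]
  hH10F10 := by simp [g.hH10E10]
  hH01F01 := by simp [g.hH01E01]
  hH10F01 := by simp [g.hH10E01]
  hH01F10 := by simp [g.hH01E10]
  serreE1 := g.serreF1
  serreE2 := g.serreF2
  serreF1 := g.serreE1
  serreF2 := g.serreE2
  generates := by
    rw [eq_top_iff, ← g.generates, LieSubalgebra.lieSpan_le]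
    have h : ∀ x ∈ ({g.F10, g.F01, g.E10, g.E01, -g.H10, -g.H01} : Set L),
        x ∈ LieSubalgebra.lieSpan ℂ L {g.F10, g.F01, g.E10, g.E01, -g.H10, -g.H01} :=
      fun _ hx ↦ LieSubalgebra.subset_lieSpan hx
    rintro x (rfl | rfl | rfl | rfl | rfl | rfl)
    · exact h _ (by simp)
    · exact h _ (by simp)
    · exact h _ (by simp)
    · exact h _ (by simp)
    · simpa using neg_mem (h (-g.H10) (by simp))
    · simpa using neg_mem (h (-g.H01) (by simp))

@[simp] lemma swap_E10 : g.swap.E10 = g.F10 := rfl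
@[simp] lemma swap_E01 : g.swap.E01 = g.F01 := rfl
@[simp] lemma swap_F10 : g.swap.F10 = g.E10 := rfl
@[simp] lemma swap_F01 : g.swap.F01 = g.E01 := rfl
@[simp] lemma swap_H10 : g.swap.H10 = -g.H10 := rfl
@[simp] lemma swap_H01 : g.swap.H01 = -g.H01 := rfl
@[simp] lemma swap_E11 : g.swap.E11 = -g.F11 := by simp [E11, F11]
@[simp] lemma swap_E21 : g.swap.E21 = g.F21 := by simp [E21, F21]
@[simp] lemma swap_E31 : g.swap.E31 = -g.F31 := by
  rw [E31, F31, swap_E21, swap_E10, ← lie_skew, smul_neg]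
@[simp] lemma swap_E32 : g.swap.E32 = g.F32 := by simp [E32, F32]
@[simp] lemma swap_F11 : g.swap.F11 = -g.E11 := by simp [E11, F11]
@[simp] lemma swap_F21 : g.swap.F21 = g.E21 := by simp [E21, F21]
@[simp] lemma swap_F31 : g.swap.F31 = -g.E31 := by
  rw [E31, F31, swap_F21, swap_F10, ← lie_skew, smul_neg]
@[simp] lemma swap_F32 : g.swap.F32 = g.E32 := by simp [E32, F32]

/-! ### Structure constants -/

attribute [simp] hH10H01 hE10F10 hE01F01 hE10F01 hE01F10 hH10E10 hH01E01 hH10E01 hH01E10 hH10F10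
  hH01F01 hH10F01 hH01F10

@[simp] lemma lie_E10_E01 : ⁅g.E10, g.E01⁆ = g.E11 := rfl

@[simp] lemma lie_E10_E11 : ⁅g.E10, g.E11⁆ = (-2 : ℂ) • g.E21 := by
  rw [E21, ← lie_skew, smul_smul]; module

@[simp] lemma lie_E10_E21 : ⁅g.E10, g.E21⁆ = (-3 : ℂ) • g.E31 := by
  rw [E31, ← lie_skew, smul_smul]; module

@[simp] lemma lie_E10_E31 : ⁅g.E10, g.E31⁆ = 0 := by simpa using g.serreE1

@[simp] lemma lie_E01_E10 : ⁅g.E01, g.E10⁆ = -g.E11 := by rw [E11, lie_skew]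

@[simp] lemma lie_E01_E11 : ⁅g.E01, g.E11⁆ = 0 := by
  rw [← neg_eq_zero, ← lie_neg, E11, lie_skew, serreE2]

@[simp] lemma lie_E01_E21 : ⁅g.E01, g.E21⁆ = 0 := by rw [E21, lie_smul, leibniz_lie]; simp
@[simp] lemma lie_E01_E31 : ⁅g.E01, g.E31⁆ = -g.E32 := by rw [E32, lie_skew]

lemma lie_E11 (x : L) : ⁅g.E11, x⁆ = ⁅g.E10, ⁅g.E01, x⁆⁆ - ⁅g.E01, ⁅g.E10, x⁆⁆ := lie_lie _ _ _

lemma lie_E21 (x : L) :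
    ⁅g.E21, x⁆ = (2 : ℂ)⁻¹ • (⁅g.E11, ⁅g.E10, x⁆⁆ - ⁅g.E10, ⁅g.E11, x⁆⁆) := by
  rw [E21, smul_lie, lie_lie]

lemma lie_E31 (x : L) :
    ⁅g.E31, x⁆ = (3 : ℂ)⁻¹ • (⁅g.E21, ⁅g.E10, x⁆⁆ - ⁅g.E10, ⁅g.E21, x⁆⁆) := by
  rw [E31, smul_lie, lie_lie]

@[simp] lemma lie_E11_E21 : ⁅g.E11, g.E21⁆ = (-3 : ℂ) • g.E32 := by rw [lie_E11]; simp

@[simp] lemma lie_E11_E31 : ⁅g.E11, g.E31⁆ = 0 := by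
  have h : (6 : ℂ) • ⁅g.E11, g.E31⁆ = 0 := by
    have hE32 : ⁅g.E10, g.E32⁆ = -⁅g.E11, g.E31⁆ := by
      rw [lie_E11]; simp
    have := leibniz_lie g.E10 g.E11 g.E21
    simp only [lie_E11_E21, lie_E10_E11, lie_E10_E21, lie_smul, smul_lie, lie_self, hE32] at this
    rw [← sub_eq_zero] at this
    rw [← this]; module
  exact (smul_eq_zero.1 h).resolve_left (by norm_num)

@[simp] lemma lie_E10_E32 : ⁅g.E10, g.E32⁆ = 0 := by simpa [-lie_skew] using (g.lie_E11 g.E31).symm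

@[simp] lemma lie_E01_E32 : ⁅g.E01, g.E32⁆ = 0 := by simpa using leibniz_lie g.E01 g.E11 g.E21

@[simp] lemma lie_E31_E32 : ⁅g.E31, g.E32⁆ = 0 := by simp [-lie_skew, lie_E31, lie_E21, lie_E11]

@[simp] lemma lie_E10_H10 : ⁅g.E10, g.H10⁆ = (-2 : ℂ) • g.E10 := by rw [← lie_skew, hH10E10]; module
@[simp] lemma lie_E10_H01 : ⁅g.E10, g.H01⁆ = g.E10 := by rw [← lie_skew, hH01E10]; module

@[simp] lemma lie_E01_H10 : ⁅g.E01, g.H10⁆ = (3 : ℂ) • g.E01 := by rw [← lie_skew, hH10E01]; module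
@[simp] lemma lie_E01_H01 : ⁅g.E01, g.H01⁆ = (-2 : ℂ) • g.E01 := by rw [← lie_skew, hH01E01]; module

@[simp] lemma lie_F10_E10 : ⁅g.F10, g.E10⁆ = -g.H10 := g.swap.hE10F10

@[simp] lemma lie_F01_E01 : ⁅g.F01, g.E01⁆ = -g.H01 := g.swap.hE01F01

@[simp] lemma lie_F10_E01 : ⁅g.F10, g.E01⁆ = 0 := g.swap.hE10F01

@[simp] lemma lie_F01_E10 : ⁅g.F01, g.E10⁆ = 0 := g.swap.hE01F10

@[simp] lemma lie_F10_H10 : ⁅g.F10, g.H10⁆ = (2 : ℂ) • g.F10 := by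
  simpa [-lie_skew, neg_eq_iff_eq_neg] using g.swap.lie_E10_H10

@[simp] lemma lie_F10_H01 : ⁅g.F10, g.H01⁆ = -g.F10 := by
  simpa [-lie_skew, neg_eq_iff_eq_neg] using g.swap.lie_E10_H01

@[simp] lemma lie_F01_H10 : ⁅g.F01, g.H10⁆ = (-3 : ℂ) • g.F01 := by
  simpa [-lie_skew, neg_eq_iff_eq_neg] using g.swap.lie_E01_H10

@[simp] lemma lie_F01_H01 : ⁅g.F01, g.H01⁆ = (2 : ℂ) • g.F01 := by
  simpa [-lie_skew, neg_eq_iff_eq_neg] using g.swap.lie_E01_H01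

@[simp] lemma lie_F01_F10 : ⁅g.F01, g.F10⁆ = g.F11 := rfl

@[simp] lemma lie_F10_F01 : ⁅g.F10, g.F01⁆ = -g.F11 := by simpa [-lie_skew] using g.swap.lie_E10_E01

@[simp] lemma lie_F10_F11 : ⁅g.F10, g.F11⁆ = (2 : ℂ) • g.F21 := by
  simpa [-lie_skew, neg_eq_iff_eq_neg] using g.swap.lie_E10_E11

@[simp] lemma lie_F10_F21 : ⁅g.F10, g.F21⁆ = (3 : ℂ) • g.F31 := by
  simpa [-lie_skew] using g.swap.lie_E10_E21

@[simp] lemma lie_F10_F31 : ⁅g.F10, g.F31⁆ = 0 := by simpa [-lie_skew] using g.swap.lie_E10_E31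
@[simp] lemma lie_F10_F32 : ⁅g.F10, g.F32⁆ = 0 := by simpa [-lie_skew] using g.swap.lie_E10_E32

@[simp] lemma lie_F01_F11 : ⁅g.F01, g.F11⁆ = 0 := by simpa [-lie_skew] using g.swap.lie_E01_E11
@[simp] lemma lie_F01_F21 : ⁅g.F01, g.F21⁆ = 0 := by simpa [-lie_skew] using g.swap.lie_E01_E21
@[simp] lemma lie_F01_F31 : ⁅g.F01, g.F31⁆ = g.F32 := rfl
@[simp] lemma lie_F01_F32 : ⁅g.F01, g.F32⁆ = 0 := by simpa [-lie_skew] using g.swap.lie_E01_E32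

lemma lie_F11 (x : L) : ⁅g.F11, x⁆ = ⁅g.F01, ⁅g.F10, x⁆⁆ - ⁅g.F10, ⁅g.F01, x⁆⁆ := lie_lie _ _ _

lemma lie_F21 (x : L) :
    ⁅g.F21, x⁆ = (2 : ℂ)⁻¹ • (⁅g.F10, ⁅g.F11, x⁆⁆ - ⁅g.F11, ⁅g.F10, x⁆⁆) := by
  rw [F21, smul_lie, lie_lie]

lemma lie_F31 (x : L) :
    ⁅g.F31, x⁆ = (3 : ℂ)⁻¹ • (⁅g.F10, ⁅g.F21, x⁆⁆ - ⁅g.F21, ⁅g.F10, x⁆⁆) := by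
  rw [F31, smul_lie, lie_lie]

lemma lie_F32 (x : L) : ⁅g.F32, x⁆ = ⁅g.F01, ⁅g.F31, x⁆⁆ - ⁅g.F31, ⁅g.F01, x⁆⁆ := lie_lie _ _ _

@[simp] lemma lie_H10_F11 : ⁅g.H10, g.F11⁆ = g.F11 := by
  rw [F11, leibniz_lie]; simp only [hH10F10, hH10F01, lie_smul, smul_lie]; module

@[simp] lemma lie_H10_F21 : ⁅g.H10, g.F21⁆ = -g.F21 := by
  rw [F21, lie_smul, leibniz_lie]
  simp only [hH10F10, smul_lie, lie_F10_F11, lie_H10_F11]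
  module

@[simp] lemma lie_H01_F11 : ⁅g.H01, g.F11⁆ = -g.F11 := by
  rw [F11, leibniz_lie]
  simp only [hH01F01, smul_lie, lie_F01_F10, hH01F10, one_smul]
  module

@[simp] lemma lie_H01_F21 : ⁅g.H01, g.F21⁆ = 0 := by rw [F21, lie_smul, leibniz_lie]; simp
@[simp] lemma lie_H01_F31 : ⁅g.H01, g.F31⁆ = g.F31 := by rw [F31, lie_smul, leibniz_lie]; simp

@[simp] lemma lie_E10_F11 : ⁅g.E10, g.F11⁆ = (-3 : ℂ) • g.F01 := by rw [F11, leibniz_lie]; simp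

@[simp] lemma lie_E10_F21 : ⁅g.E10, g.F21⁆ = (2 : ℂ) • g.F11 := by
  rw [F21, lie_smul, leibniz_lie]
  simp only [hE10F10, lie_H10_F11, lie_E10_F11, lie_smul, lie_F10_F01]
  module

@[simp] lemma lie_E10_F31 : ⁅g.E10, g.F31⁆ = g.F21 := by
  rw [F31, lie_smul, leibniz_lie]
  simp only [hE10F10, lie_H10_F21, lie_E10_F21, lie_smul, lie_F10_F11]
  module

@[simp] lemma lie_E10_F32 : ⁅g.E10, g.F32⁆ = 0 := by rw [F32, leibniz_lie]; simp

@[simp] lemma lie_E01_F11 : ⁅g.E01, g.F11⁆ = g.F10 := by rw [F11, leibniz_lie]; simp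
@[simp] lemma lie_E01_F21 : ⁅g.E01, g.F21⁆ = 0 := by rw [F21, lie_smul, leibniz_lie]; simp
@[simp] lemma lie_E01_F31 : ⁅g.E01, g.F31⁆ = 0 := by rw [F31, lie_smul, leibniz_lie]; simp
@[simp] lemma lie_E01_F32 : ⁅g.E01, g.F32⁆ = g.F31 := by rw [F32, leibniz_lie]; simp

@[simp] lemma lie_F10_E11 : ⁅g.F10, g.E11⁆ = (3 : ℂ) • g.E01 := by
  simpa [-lie_skew, neg_eq_iff_eq_neg] using g.swap.lie_E10_F11

@[simp] lemma lie_F10_E21 : ⁅g.F10, g.E21⁆ = (-2 : ℂ) • g.E11 := by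
  simpa [-lie_skew, neg_eq_iff_eq_neg] using g.swap.lie_E10_F21

@[simp] lemma lie_F10_E31 : ⁅g.F10, g.E31⁆ = -g.E21 := by
  simpa [-lie_skew, neg_eq_iff_eq_neg] using g.swap.lie_E10_F31

@[simp] lemma lie_F10_E32 : ⁅g.F10, g.E32⁆ = 0 := by
  simpa [-lie_skew, neg_eq_iff_eq_neg] using g.swap.lie_E10_F32

@[simp] lemma lie_F01_E11 : ⁅g.F01, g.E11⁆ = -g.E10 := by
  simpa [-lie_skew, neg_eq_iff_eq_neg] using g.swap.lie_E01_F11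

@[simp] lemma lie_F01_E21 : ⁅g.F01, g.E21⁆ = 0 := by
  simpa [-lie_skew, neg_eq_iff_eq_neg] using g.swap.lie_E01_F21

@[simp] lemma lie_F01_E31 : ⁅g.F01, g.E31⁆ = 0 := by
  simpa [-lie_skew, neg_eq_iff_eq_neg] using g.swap.lie_E01_F31

@[simp] lemma lie_F01_E32 : ⁅g.F01, g.E32⁆ = -g.E31 := by
  simpa [-lie_skew, neg_eq_iff_eq_neg] using g.swap.lie_E01_F32

@[simp] lemma lie_E11_F01 : ⁅g.E11, g.F01⁆ = g.E10 := by rw [lie_E11]; simp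
@[simp] lemma lie_E11_F10 : ⁅g.E11, g.F10⁆ = (-3 : ℂ) • g.E01 := by rw [lie_E11]; simp
@[simp] lemma lie_E11_F11 : ⁅g.E11, g.F11⁆ = g.H11 := by rw [lie_E11]; simp [H11]
@[simp] lemma lie_E11_F21 : ⁅g.E11, g.F21⁆ = (-2 : ℂ) • g.F10 := by rw [lie_E11]; simp
@[simp] lemma lie_E11_F31 : ⁅g.E11, g.F31⁆ = 0 := by rw [lie_E11]; simp
@[simp] lemma lie_E11_F32 : ⁅g.E11, g.F32⁆ = g.F21 := by rw [lie_E11]; simp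

@[simp] lemma lie_E11_H10 : ⁅g.E11, g.H10⁆ = g.E11 := by
  rw [lie_E11]
  simp only [lie_E01_H10, lie_smul, lie_E10_E01, lie_E10_H10, lie_E01_E10]
  module

@[simp] lemma lie_E11_H01 : ⁅g.E11, g.H01⁆ = -g.E11 := by
  rw [lie_E11]
  simp only [lie_E01_H01, lie_smul, lie_E10_E01, lie_E10_H01, lie_E01_E10]
  module

@[simp] lemma lie_E11_E10 : ⁅g.E11, g.E10⁆ = (2 : ℂ) • g.E21 := by
  rw [E21, smul_inv_smul₀ two_ne_zero]

@[simp] lemma lie_E21_F01 : ⁅g.E21, g.F01⁆ = 0 := by rw [lie_E21]; simp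

@[simp] lemma lie_E21_F10 : ⁅g.E21, g.F10⁆ = (2 : ℂ) • g.E11 := by
  rw [lie_E21]
  simp only [hE10F10, lie_E11_H10, lie_E11_F10, lie_smul, lie_E10_E01]
  module

@[simp] lemma lie_E21_F11 : ⁅g.E21, g.F11⁆ = (-2 : ℂ) • g.E10 := by
  rw [lie_E21]
  simp only [lie_E10_F11, lie_smul, lie_E11_F01, lie_E11_F11, H11, lie_add, lie_E10_H10,
    lie_E10_H01]
  module

@[simp] lemma lie_E21_F21 : ⁅g.E21, g.F21⁆ = g.H21 := by
  rw [lie_E21]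
  simp only [lie_E10_F21, lie_smul, lie_E11_F11, H11, lie_E11_F21, hE10F10, H21]
  module

@[simp] lemma lie_E21_F31 : ⁅g.E21, g.F31⁆ = -g.F10 := by rw [lie_E21]; simp
@[simp] lemma lie_E21_F32 : ⁅g.E21, g.F32⁆ = -g.F11 := by rw [lie_E21]; simp

@[simp] lemma lie_E21_H10 : ⁅g.E21, g.H10⁆ = -g.E21 := by
  rw [lie_E21]
  simp only [lie_E10_H10, lie_smul, lie_E11_E10, lie_E11_H10, lie_E10_E11]
  module

@[simp] lemma lie_E21_H01 : ⁅g.E21, g.H01⁆ = 0 := by rw [lie_E21]; simp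

@[simp] lemma lie_F11_E10 : ⁅g.F11, g.E10⁆ = (3 : ℂ) • g.F01 := by rw [lie_F11]; simp
@[simp] lemma lie_F11_E01 : ⁅g.F11, g.E01⁆ = -g.F10 := by rw [lie_F11]; simp

@[simp] lemma lie_F11_E11 : ⁅g.F11, g.E11⁆ = -g.H11 := by
  rw [lie_F11]
  simp only [lie_F10_E11, lie_smul, lie_F01_E01, lie_F01_E11, lie_neg, lie_F10_E10, H11]
  module

@[simp] lemma lie_F11_E21 : ⁅g.F11, g.E21⁆ = (2 : ℂ) • g.E10 := by rw [lie_F11]; simp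
@[simp] lemma lie_F11_E31 : ⁅g.F11, g.E31⁆ = 0 := by rw [lie_F11]; simp
@[simp] lemma lie_F11_E32 : ⁅g.F11, g.E32⁆ = -g.E21 := by rw [lie_F11]; simp

@[simp] lemma lie_F11_H10 : ⁅g.F11, g.H10⁆ = -g.F11 := by
  rw [lie_F11]
  simp only [lie_F10_H10, lie_smul, lie_F01_F10, lie_F01_H10, lie_F10_F01]
  module

@[simp] lemma lie_F11_H01 : ⁅g.F11, g.H01⁆ = g.F11 := by
  rw [lie_F11]
  simp only [lie_F10_H01, lie_neg, lie_F01_F10, lie_F01_H01, lie_smul, lie_F10_F01]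
  module

@[simp] lemma lie_F11_F10 : ⁅g.F11, g.F10⁆ = (-2 : ℂ) • g.F21 := by rw [lie_F11]; simp
@[simp] lemma lie_F11_F21 : ⁅g.F11, g.F21⁆ = (3 : ℂ) • g.F32 := by rw [lie_F11]; simp
@[simp] lemma lie_F11_F01 : ⁅g.F11, g.F01⁆ = 0 := by rw [lie_F11]; simp
@[simp] lemma lie_F11_F31 : ⁅g.F11, g.F31⁆ = 0 := by rw [lie_F11]; simp
@[simp] lemma lie_F11_F32 : ⁅g.F11, g.F32⁆ = 0 := by rw [lie_F11]; simp

@[simp] lemma lie_F21_F11 : ⁅g.F21, g.F11⁆ = (-3 : ℂ) • g.F32 := by rw [lie_F21]; simp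
@[simp] lemma lie_F21_F10 : ⁅g.F21, g.F10⁆ = (-3 : ℂ) • g.F31 := by rw [lie_F21]; simp
@[simp] lemma lie_F21_F01 : ⁅g.F21, g.F01⁆ = 0 := by rw [lie_F21]; simp
@[simp] lemma lie_F21_F31 : ⁅g.F21, g.F31⁆ = 0 := by rw [lie_F21]; simp
@[simp] lemma lie_F21_F32 : ⁅g.F21, g.F32⁆ = 0 := by rw [lie_F21]; simp

@[simp] lemma lie_F21_H10 : ⁅g.F21, g.H10⁆ = g.F21 := by
  rw [lie_F21]
  simp only [lie_F11_H10, lie_neg, lie_F10_F11, lie_F10_H10, lie_smul, lie_F11_F10]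
  module

@[simp] lemma lie_F21_H01 : ⁅g.F21, g.H01⁆ = 0 := by rw [lie_F21]; simp

@[simp] lemma lie_F21_E10 : ⁅g.F21, g.E10⁆ = (-2 : ℂ) • g.F11 := by
  rw [lie_F21]
  simp only [lie_F11_E10, lie_smul, lie_F10_F01, lie_F10_E10, lie_neg, lie_F11_H10]
  module

@[simp] lemma lie_F21_E01 : ⁅g.F21, g.E01⁆ = 0 := by rw [lie_F21]; simp

@[simp] lemma lie_F21_E11 : ⁅g.F21, g.E11⁆ = (2 : ℂ) • g.F10 := by
  rw [lie_F21]
  simp only [lie_F11_E11, H11, lie_add, lie_neg, lie_smul, lie_F10_H01, lie_F10_H10, lie_F10_E11,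
    lie_F11_E01]
  module

@[simp] lemma lie_F21_E21 : ⁅g.F21, g.E21⁆ = -g.H21 := by
  rw [lie_F21]
  simp only [lie_F11_E21, lie_smul, lie_F10_E10, lie_F10_E21, lie_F11_E11, H11, H21]
  module

@[simp] lemma lie_F21_E31 : ⁅g.F21, g.E31⁆ = g.E10 := by rw [lie_F21]; simp
@[simp] lemma lie_F21_E32 : ⁅g.F21, g.E32⁆ = g.E11 := by rw [lie_F21]; simp

@[simp] lemma lie_F31_E21 : ⁅g.F31, g.E21⁆ = g.F10 := by rw [lie_F31]; simp [H21]

@[simp] lemma lie_F31_E31 : ⁅g.F31, g.E31⁆ = -g.H31 := by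
  rw [lie_F31]
  simp only [lie_F21_E31, lie_F10_E10, lie_F10_E31, lie_neg, lie_F21_E21, H21, H31]
  module

@[simp] lemma lie_F31_E11 : ⁅g.F31, g.E11⁆ = 0 := by rw [lie_F31]; simp
@[simp] lemma lie_F31_E32 : ⁅g.F31, g.E32⁆ = g.E01 := by rw [lie_F31]; simp

@[simp] lemma lie_F31_E10 : ⁅g.F31, g.E10⁆ = -g.F21 := by
  rw [lie_F31]
  simp only [lie_F21_E10, lie_neg, lie_smul, lie_F10_F11, lie_F10_E10, lie_F21_H10]
  module

@[simp] lemma lie_F31_E01 : ⁅g.F31, g.E01⁆ = 0 := by rw [lie_F31]; simp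
@[simp] lemma lie_F31_H01 : ⁅g.F31, g.H01⁆ = -g.F31 := by rw [lie_F31]; simp

@[simp] lemma lie_F31_H10 : ⁅g.F31, g.H10⁆ = (3 : ℂ) • g.F31 := by
  rw [lie_F31]
  simp only [lie_F21_H10, lie_F10_F21, lie_F10_H10, lie_smul, lie_F21_F10]
  module

@[simp] lemma lie_F31_F01 : ⁅g.F31, g.F01⁆ = -g.F32 := by rw [lie_F31]; simp
@[simp] lemma lie_F31_F10 : ⁅g.F31, g.F10⁆ = 0 := by rw [lie_F31]; simp
@[simp] lemma lie_F31_F11 : ⁅g.F31, g.F11⁆ = 0 := by rw [← lie_skew, lie_F11_F31, neg_zero]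
@[simp] lemma lie_F31_F21 : ⁅g.F31, g.F21⁆ = 0 := by rw [lie_F31]; simp
@[simp] lemma lie_F31_F32 : ⁅g.F31, g.F32⁆ = 0 := by rw [lie_F31]; simp

@[simp] lemma lie_F32_E21 : ⁅g.F32, g.E21⁆ = g.F11 := by rw [lie_F32]; simp
@[simp] lemma lie_F32_E10 : ⁅g.F32, g.E10⁆ = 0 := by rw [lie_F32]; simp
@[simp] lemma lie_F32_E01 : ⁅g.F32, g.E01⁆ = -g.F31 := by rw [lie_F32]; simp
@[simp] lemma lie_F32_E11 : ⁅g.F32, g.E11⁆ = -g.F21 := by rw [lie_F32]; simp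

@[simp] lemma lie_F32_E31 : ⁅g.F32, g.E31⁆ = g.F01 := by
  rw [lie_F32]
  simp only [lie_F31_E31, H31, lie_add, lie_neg, lie_F01_H01, lie_F01_H10, lie_F01_E31, lie_zero]
  module

@[simp] lemma lie_F32_E32 : ⁅g.F32, g.E32⁆ = -g.H32 := by
  rw [lie_F32]
  simp only [lie_F31_E32, lie_F01_E01, lie_F01_E32, lie_neg, lie_F31_E31, H31, H32]
  module

@[simp] lemma lie_F32_H01 : ⁅g.F32, g.H01⁆ = g.F32 := by
  rw [lie_F32]
  simp only [lie_F31_H01, lie_neg, lie_F01_F31, lie_F01_H01, lie_smul, lie_F31_F01]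
  module

@[simp] lemma lie_F32_H10 : ⁅g.F32, g.H10⁆ = 0 := by rw [lie_F32]; simp
@[simp] lemma lie_F32_F01 : ⁅g.F32, g.F01⁆ = 0 := by rw [lie_F32]; simp
@[simp] lemma lie_F32_F11 : ⁅g.F32, g.F11⁆ = 0 := by rw [lie_F32]; simp
@[simp] lemma lie_F32_F21 : ⁅g.F32, g.F21⁆ = 0 := by rw [lie_F32]; simp
@[simp] lemma lie_F32_F31 : ⁅g.F32, g.F31⁆ = 0 := by rw [lie_F32]; simp

@[simp] lemma lie_E32_F31 : ⁅g.E32, g.F31⁆ = -g.E01 := by rw [← lie_skew, lie_F31_E32]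

lemma lie_H11_E11 : ⁅g.H11, g.E11⁆ = (2 : ℂ) • g.E11 := by
  rw [← lie_skew, H11]
  simp only [lie_add, lie_E11_H10, lie_smul, lie_E11_H01]
  module

lemma lie_H21_E21 : ⁅g.H21, g.E21⁆ = (2 : ℂ) • g.E21 := by
  rw [← lie_skew, H21]
  simp

@[simp] lemma lie_E31_F32 : ⁅g.E31, g.F32⁆ = -g.F01 := by rw [← lie_skew, lie_F32_E31]

/-! ### Strings through `a`, `b` and `c` -/

lemma isStringEnd_F31_E31 :
    IsStringEnd (adULinear g.F31) 2 (ιU g.E31) (ιU ((-2 : ℂ) • g.F31)) := by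
  have hH31 : ⁅g.F31, g.H31⁆ = (2 : ℂ) • g.F31 := by
    rw [H31, lie_add, lie_F31_H10, lie_F31_H01]
    module
  exact isStringEnd_ιU (by simp [hH31]) (by simp)

lemma isStringEnd_F31_E32 : IsStringEnd (adULinear g.F31) 1 (ιU g.E32) (ιU g.E01) :=
  isStringEnd_ιU (by simp) (by simp)

lemma isStringEnd_F31_aU : IsStringEnd (adULinear g.F31) 1 g.aU (ιU g.F10) :=
  isStringEnd_ιU (by simp) (by simp)

lemma isStringEnd_F31_bU : IsStringEnd (adULinear g.F31) 2 g.bU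
    ((2 : ℂ) • (ιU g.E01 * ιU g.F21 - ιU g.F31 * ιU g.E11)) := by
  have hE11 : IsStringEnd (adULinear g.F31) 0 (ιU g.E11) (ιU g.E11) :=
    isStringEnd_ιU (by simp) (by simp)
  have hE10 : IsStringEnd (adULinear g.F31) 1 (ιU g.E10) (ιU (-g.F21)) :=
    isStringEnd_ιU (by simp) (by simp)
  refine ((g.isStringEnd_F31_E31.ιU_mul hE11).sub
    (g.isStringEnd_F31_E32.ιU_mul hE10)).congr_end ?_
  simp only [Nat.choose_self, Nat.cast_one, ιU_neg, ιU_smul, Algebra.smul_mul_assoc,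
    Nat.reduceAdd, Nat.choose_succ_self_right, Nat.cast_ofNat, mul_neg]
  module

lemma isStringEnd_F31_E31_mul_E01_sub : IsStringEnd (adULinear g.F31) 1
    (ιU g.E31 * ιU g.E01 - ιU g.E32 * ιU g.H01)
    (ιU g.E32 * ιU g.F31 - ιU g.H31 * ιU g.E01 - ιU g.E01 * ιU g.H01) where
  iterate_apply := by
    simp only [Function.iterate_one, map_sub, adULinear_mul, adULinear_ιU, lie_F31_E31, ιU_neg,
      neg_mul, lie_F31_E01, ιU_zero, mul_zero, add_zero, lie_F31_E32, lie_F31_H01, mul_neg]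
    abel
  apply_end := by
    have h : Commute (ιU g.F31) (ιU g.E01) := commute_ιU (by simp)
    simp only [H31, ιU_add, add_mul, map_sub, adULinear_mul, adULinear_ιU, lie_F31_E32, ← h.eq,
      lie_self, ιU_zero, mul_zero, map_add, lie_F31_H10, ιU_smul, Algebra.smul_mul_assoc,
      lie_F31_E01, lie_F31_H01, ιU_neg, neg_mul, zero_mul, mul_neg]
    module

-- Factoring out one `E₃₁` combines the strings of `E₃₁E₀₁` and `E₃₂H₀₁`, which are longer than
-- that of their difference.
lemma isStringEnd_F31_cU : IsStringEnd (adULinear g.F31) 3 g.cU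
    ((-6 : ℂ) • (ιU g.F31 * (ιU g.E32 * ιU g.F31 - ιU g.H31 * ιU g.E01 - ιU g.E01 * ιU g.H01))
      + (6 : ℂ) • (ιU g.E01 * ιU g.E01 * ιU g.F32)) := by
  have hF01 : IsStringEnd (adULinear g.F31) 1 (ιU g.F01) (ιU (-g.F32)) :=
    isStringEnd_ιU (by simp) (by simp)
  have hcU : g.cU = ιU g.E31 * (ιU g.E31 * ιU g.E01 - ιU g.E32 * ιU g.H01)
      - ιU g.E32 * ιU g.E32 * ιU g.F01 := by
    have h : Commute (ιU g.E31) (ιU g.E32) := commute_ιU (by simp)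
    rw [cU, ← h.eq, mul_sub, mul_assoc, mul_assoc]
  rw [hcU]
  refine ((g.isStringEnd_F31_E31.ιU_mul g.isStringEnd_F31_E31_mul_E01_sub).sub
    ((g.isStringEnd_F31_E32.ιU_mul g.isStringEnd_F31_E32).ιU_mul hF01)).congr_end ?_
  simp only [Nat.choose, Nat.reduceAdd, Nat.cast_ofNat, ιU_neg, ιU_smul,
    Algebra.smul_mul_assoc, mul_neg]
  module

lemma isStringEnd_F32_E31 : IsStringEnd (adULinear g.F32) 1 (ιU g.E31) (ιU g.F01) :=
  isStringEnd_ιU (by simp) (by simp)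

lemma isStringEnd_F32_E32 : IsStringEnd (adULinear g.F32) 2 (ιU g.E32) (ιU ((-2 : ℂ) • g.F32)) :=
  isStringEnd_ιU (by simp [H32]) (by simp)

lemma isStringEnd_F32_aU : IsStringEnd (adULinear g.F32) 1 g.aU (ιU g.F11) :=
  isStringEnd_ιU (by simp) (by simp)

lemma isStringEnd_F32_bU : IsStringEnd (adULinear g.F32) 2 g.bU
    ((2 : ℂ) • (ιU g.F32 * ιU g.E10 - ιU g.F01 * ιU g.F21)) := by
  have hE11 : IsStringEnd (adULinear g.F32) 1 (ιU g.E11) (ιU (-g.F21)) :=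
    isStringEnd_ιU (by simp) (by simp)
  have hE10 : IsStringEnd (adULinear g.F32) 0 (ιU g.E10) (ιU g.E10) :=
    isStringEnd_ιU (by simp) (by simp)
  refine ((g.isStringEnd_F32_E31.ιU_mul hE11).sub
    (g.isStringEnd_F32_E32.ιU_mul hE10)).congr_end ?_
  simp only [Nat.reduceAdd, Nat.choose_succ_self_right, Nat.cast_ofNat, ιU_neg, mul_neg,
    Nat.choose_self, Nat.cast_one, ιU_smul, Algebra.smul_mul_assoc]
  module

lemma isStringEnd_F32_E31_mul_H01_add : IsStringEnd (adULinear g.F32) 1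
    (ιU g.E31 * ιU g.H01 + ιU g.E32 * ιU g.F01)
    (ιU g.F01 * ιU g.H01 + ιU g.E31 * ιU g.F32 - ιU g.H32 * ιU g.F01) where
  iterate_apply := by
    simp [adULinear_mul, adULinear_ιU, sub_eq_add_neg]
  apply_end := by
    have h : Commute (ιU g.F01) (ιU g.F32) := commute_ιU (by simp)
    simp only [H32, ιU_add, ιU_smul, map_sub, map_add, adULinear_mul, adULinear_ιU, lie_F32_F01,
      ιU_zero, zero_mul, lie_F32_H01, h.eq, zero_add, lie_F32_E31, lie_self, mul_zero, add_zero,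
      lie_F32_H10, map_smul, Algebra.smul_mul_assoc]
    module

lemma isStringEnd_F32_cU : IsStringEnd (adULinear g.F32) 3 g.cU
    ((6 : ℂ) • (ιU g.F32 * (ιU g.F01 * ιU g.H01 + ιU g.E31 * ιU g.F32 - ιU g.H32 * ιU g.F01)
      - ιU g.F01 * ιU g.F01 * ιU g.F31)) := by
  have hE01 : IsStringEnd (adULinear g.F32) 1 (ιU g.E01) (ιU (-g.F31)) :=
    isStringEnd_ιU (by simp) (by simp)
  have hcU : g.cU = ιU g.E31 * ιU g.E31 * ιU g.E01
      - ιU g.E32 * (ιU g.E31 * ιU g.H01 + ιU g.E32 * ιU g.F01) := by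
    rw [cU, mul_add, mul_assoc (ιU g.E32), mul_assoc (ιU g.E32), sub_sub]
  rw [hcU]
  refine (((g.isStringEnd_F32_E31.ιU_mul g.isStringEnd_F32_E31).ιU_mul hE01).sub
    (g.isStringEnd_F32_E32.ιU_mul g.isStringEnd_F32_E31_mul_H01_add)).congr_end ?_
  simp only [Nat.choose, Nat.reduceAdd, Nat.cast_ofNat, ιU_neg, mul_neg, Algebra.smul_mul_assoc,
    ιU_smul]
  module

lemma isStringEnd_F21_aU : IsStringEnd (adULinear g.F21) 2 g.aU (ιU ((-2 : ℂ) • g.F21)) :=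
  isStringEnd_ιU (by simp [H21]) (by simp)

-- The strings of `E₃₁E₁₁` and `E₃₂E₁₀` have length 5 and only that of their difference stops after
-- 4 steps, so `IsStringEnd.mul` does not give its end.
lemma isStringEnd_F21_bU : IsStringEnd (adULinear g.F21) 4 g.bU
    ((24 : ℂ) • (ιU g.F11 * ιU g.F31 - ιU g.F10 * ιU g.F32)) := by
  have hDb : adULinear g.F21 g.bU
      = (2 : ℂ) • (ιU g.E31 * ιU g.F10 + ιU g.E32 * ιU g.F11 - ιU g.E21) := by
    simp only [bU, map_sub, adULinear_mul, adULinear_ιU, lie_F21_E31, ιU_mul_ιU g.E10 g.E11,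
      lie_E10_E11, ιU_smul, lie_F21_E11, Algebra.mul_smul_comm, lie_F21_E32, lie_F21_E10]
    module
  have hD2b : adULinear g.F21 (ιU g.E31 * ιU g.F10 + ιU g.E32 * ιU g.F11 - ιU g.E21)
      = ιU g.H21 + ιU g.E10 * ιU g.F10 + ιU g.E11 * ιU g.F11
        - (3 : ℂ) • (ιU g.E31 * ιU g.F31 + ιU g.E32 * ιU g.F32) := by
    simp only [map_sub, map_add, adULinear_mul, adULinear_ιU, lie_F21_E31, lie_F21_F10, ιU_neg,
      ιU_smul, Algebra.mul_smul_comm, lie_F21_E32, lie_F21_F11, lie_F21_E21]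
    module
  have hD3b : adULinear g.F21 (ιU g.H21 + ιU g.E10 * ιU g.F10 + ιU g.E11 * ιU g.F11
        - (3 : ℂ) • (ιU g.E31 * ιU g.F31 + ιU g.E32 * ιU g.F32))
      = (6 : ℂ) • (ιU g.F21 - ιU g.E10 * ιU g.F31 - ιU g.E11 * ιU g.F32) := by
    simp only [H21, ιU_add, ιU_smul, map_sub, map_add, map_smul, adULinear_ιU, lie_F21_H10,
      lie_F21_H01, ιU_zero, adULinear_mul, lie_F21_E10, Algebra.smul_mul_assoc,
      lie_F21_F10, Algebra.mul_smul_comm, lie_F21_E11, ιU_mul_ιU g.F10 g.F11, lie_F10_F11,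
      lie_F21_F11, lie_F21_E31, lie_F21_F31, mul_zero, lie_F21_E32, lie_F21_F32]
    module
  have hD4b : adULinear g.F21 (ιU g.F21 - ιU g.E10 * ιU g.F31 - ιU g.E11 * ιU g.F32)
      = (2 : ℂ) • (ιU g.F11 * ιU g.F31 - ιU g.F10 * ιU g.F32) := by
    simp only [map_sub, adULinear_ιU, lie_self, ιU_zero, adULinear_mul, lie_F21_E10,
      ιU_smul, Algebra.smul_mul_assoc, lie_F21_F31, mul_zero, lie_F21_E11, lie_F21_F32]
    module
  constructor
  · simp only [Function.iterate_succ_apply, Function.iterate_zero_apply, map_smul, hDb,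
      hD2b, hD3b, hD4b, smul_smul]
    norm_num
  · have h : Commute (ιU g.F31) (ιU g.F32) := commute_ιU (by simp)
    simp [adULinear_mul, adULinear_ιU, h.eq]

lemma isStringEnd_F21_cU : IsStringEnd (adULinear g.F21) 6 g.cU
    ((720 : ℂ) • (ιU g.F32 * ιU g.F32 * ιU g.E01 + ιU g.F31 * ιU g.F32 * ιU g.H01
      - ιU g.F31 * ιU g.F31 * ιU g.F01)) := by
  have hE31 : IsStringEnd (adULinear g.F21) 3 (ιU g.E31) (ιU ((6 : ℂ) • g.F32)) :=
    isStringEnd_ιU (by norm_num [smul_smul]) (by simp)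
  have hE32 : IsStringEnd (adULinear g.F21) 3 (ιU g.E32) (ιU ((-6 : ℂ) • g.F31)) :=
    isStringEnd_ιU (by norm_num [smul_smul]) (by simp)
  have hE01 : IsStringEnd (adULinear g.F21) 0 (ιU g.E01) (ιU g.E01) :=
    isStringEnd_ιU (by simp) (by simp)
  have hH01 : IsStringEnd (adULinear g.F21) 0 (ιU g.H01) (ιU g.H01) :=
    isStringEnd_ιU (by simp) (by simp)
  have hF01 : IsStringEnd (adULinear g.F21) 0 (ιU g.F01) (ιU g.F01) :=
    isStringEnd_ιU (by simp) (by simp)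
  refine ((((hE31.ιU_mul hE31).ιU_mul hE01).sub ((hE32.ιU_mul hE31).ιU_mul hH01)).sub
    ((hE32.ιU_mul hE32).ιU_mul hF01)).congr_end ?_
  simp only [Nat.choose, Nat.cast_one, Nat.reduceAdd, Nat.cast_ofNat, ιU_smul,
    Algebra.mul_smul_comm, Algebra.smul_mul_assoc]
  module

lemma adU_iterate_vU {x : L} {k : ℕ} {s t r : UniversalEnvelopingAlgebra ℂ L}
    (ha : IsStringEnd (adULinear x) k g.aU s) (hb : IsStringEnd (adULinear x) (2 * k) g.bU t)
    (hc : IsStringEnd (adULinear x) (3 * k) g.cU r) :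
    (adU x)^[3 * k] g.vU
      = ((2 / 9 : ℂ) * (2 * k).choose k * (3 * k).choose k) • s ^ 3
        - ((3 * k).choose k : ℂ) • (s * t) - (3 : ℂ) • r := by
  have haaa := (ha.ιU_mul (ha.ιU_mul ha)).smul (2 / 9 : ℂ)
  have hab := ha.ιU_mul hb
  have hk : k + 2 * k = 3 * k := by omega
  rw [mul_smul_comm, smul_smul, smul_smul, ← two_mul k, hk, ← pow_three, ← pow_three] at haaa
  rw [hk] at hab
  rw [vU, ← pow_three', mul_right_comm]
  exact ((haaa.sub hab).sub (hc.smul 3)).iterate_apply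

/-! ### Evaluation on singular vectors -/

variable {M : Type*} [AddCommGroup M] [Module (UniversalEnvelopingAlgebra ℂ L) M]

/-- Singular vectors of a `U(𝔤)`-module: those annihilated by `𝔫₊`. -/
structure IsSingular (m : M) : Prop where
  E10_smul : ιU g.E10 • m = 0
  E01_smul : ιU g.E01 • m = 0

namespace IsSingular

variable {g} {m : M} (hm : g.IsSingular m)
include hm

lemma add {m' : M} (hm' : g.IsSingular m') : g.IsSingular (m + m') where
  E10_smul := by rw [smul_add, hm.E10_smul, hm'.E10_smul, add_zero]
  E01_smul := by rw [smul_add, hm.E01_smul, hm'.E01_smul, add_zero]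

lemma E11_smul : ιU g.E11 • m = 0 := ιU_lie_smul_eq_zero hm.E10_smul hm.E01_smul

variable [Module ℂ M] [IsScalarTower ℂ (UniversalEnvelopingAlgebra ℂ L) M]

lemma smul (c : ℂ) : g.IsSingular (c • m) where
  E10_smul := by rw [smul_comm, hm.E10_smul, smul_zero]
  E01_smul := by rw [smul_comm, hm.E01_smul, smul_zero]

lemma E21_smul : ιU g.E21 • m = 0 := by
  rw [E21, ιU_smul_smul, ιU_lie_smul_eq_zero hm.E11_smul hm.E10_smul, smul_zero]

lemma E31_smul : ιU g.E31 • m = 0 := by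
  rw [E31, ιU_smul_smul, ιU_lie_smul_eq_zero hm.E21_smul hm.E10_smul, smul_zero]

lemma E32_smul : ιU g.E32 • m = 0 := ιU_lie_smul_eq_zero hm.E31_smul hm.E01_smul

lemma H10_smul : g.IsSingular (ιU g.H10 • m) where
  E10_smul := by
    rw [ιU_smul_ιU_smul_of_eq_zero hm.E10_smul, lie_E10_H10]
    simp [hm.E10_smul]
  E01_smul := by
    rw [ιU_smul_ιU_smul_of_eq_zero hm.E01_smul, lie_E01_H10]
    simp [hm.E01_smul]

lemma H01_smul : g.IsSingular (ιU g.H01 • m) where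
  E10_smul := by
    rw [ιU_smul_ιU_smul_of_eq_zero hm.E10_smul, lie_E10_H01, hm.E10_smul]
  E01_smul := by
    rw [ιU_smul_ιU_smul_of_eq_zero hm.E01_smul, lie_E01_H01]
    simp [hm.E01_smul]

lemma H21_smul : g.IsSingular (ιU g.H21 • m) := by
  simpa [H21, add_smul] using (hm.H10_smul.smul 2).add (hm.H01_smul.smul 3)

lemma H31_smul : g.IsSingular (ιU g.H31 • m) := by
  rw [H31, ιU_add, add_smul]
  exact hm.H10_smul.add hm.H01_smul

lemma adU_F31_iterate_vU_smul :
    (adU g.F31)^[3] g.vU • m = (4 / 3 : ℂ) • ιU g.F10 ^ 3 • m := by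
  rw [g.adU_iterate_vU g.isStringEnd_F31_aU g.isStringEnd_F31_bU g.isStringEnd_F31_cU]
  have hb : (ιU g.E01 * ιU g.F21 - ιU g.F31 * ιU g.E11) • m = 0 := by
    simp [sub_smul, mul_smul, hm.E11_smul, ιU_smul_ιU_smul_of_eq_zero hm.E01_smul]
  have hp : (ιU g.E32 * ιU g.F31 - ιU g.H31 * ιU g.E01 - ιU g.E01 * ιU g.H01) • m = 0 := by
    simp [sub_smul, mul_smul, hm.E01_smul, hm.H01_smul.E01_smul,
      ιU_smul_ιU_smul_of_eq_zero hm.E32_smul]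
  have hF32 : (ιU g.E01 * ιU g.E01 * ιU g.F32) • m = 0 := by
    simp [mul_smul, ιU_smul_ιU_smul_of_eq_zero hm.E01_smul]
  simp only [sub_smul, add_smul, smul_assoc, mul_smul, hb, hp, hF32]
  norm_num [Nat.choose, smul_smul]

theorem adU_E10_adU_F31_vU_smul :
    (adU g.E10)^[3] ((adU g.F31)^[3] g.vU) • m
      = ((8 : ℂ) • (ιU g.H10 * (ιU g.H10 - 1) * (ιU g.H10 - 2))) • m := by
  rw [adU_iterate_smul hm.E10_smul, hm.adU_F31_iterate_vU_smul, smul_comm,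
    ιU_pow_three_smul_pow_three_smul g.hE10F10 g.hH10E10 hm.E10_smul, smul_assoc, smul_smul]
  norm_num

lemma adU_F32_iterate_vU_smul :
    (adU g.F32)^[3] g.vU • m = (4 / 3 : ℂ) • ιU g.F11 ^ 3 • m
      + (6 : ℂ) • ιU g.F11 • ιU g.F01 • ιU g.F21 • m
      + (18 : ℂ) • (ιU g.F01 • ιU g.F01 • ιU g.F31 • m + ιU g.F32 • ιU g.F01 • ιU g.H31 • m) := by
  rw [g.adU_iterate_vU g.isStringEnd_F32_aU g.isStringEnd_F32_bU g.isStringEnd_F32_cU]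
  have hb : (ιU g.F32 * ιU g.E10 - ιU g.F01 * ιU g.F21) • m = -(ιU g.F01 • ιU g.F21 • m) := by
    simp [sub_smul, mul_smul, hm.E10_smul]
  have hq : (ιU g.F01 * ιU g.H01 + ιU g.E31 * ιU g.F32 - ιU g.H32 * ιU g.F01) • m
      = -(ιU g.F01 • ιU g.H31 • m) := by
    simp only [sub_smul, add_smul, mul_smul, ιU_smul_ιU_smul_of_eq_zero hm.E31_smul, lie_E31_F32,
      ιU_smul_ιU_smul g.H32 g.F01]
    simp only [H31, H32, add_lie, smul_lie, hH10F01, hH01F01, ιU_add, ιU_smul, ιU_neg, add_smul,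
      neg_smul, smul_add, smul_assoc, smul_comm (_ : UniversalEnvelopingAlgebra ℂ L) (_ : ℂ)]
    generalize ιU g.F01 • m = x, ιU g.F01 • ιU g.H01 • m = y, ιU g.F01 • ιU g.H10 • m = z
    module
  simp only [sub_smul, smul_assoc, mul_smul, hb, hq, smul_neg,
    smul_comm (_ : UniversalEnvelopingAlgebra ℂ L) (_ : ℂ)]
  generalize ιU g.F11 ^ 3 • m = w, ιU g.F11 • ιU g.F01 • ιU g.F21 • m = x,
    ιU g.F01 • ιU g.F01 • ιU g.F31 • m = y, ιU g.F32 • ιU g.F01 • ιU g.H31 • m = z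
  simp only [Nat.choose, Nat.reduceAdd, Nat.cast_ofNat]
  module

lemma E11_smul_F01_smul_F21_smul :
    ιU g.E11 • ιU g.F01 • ιU g.F21 • m
      = (2 : ℂ) • ιU g.F11 • m - (2 : ℂ) • ιU g.F01 • ιU g.F10 • m := by
  simp [ιU_smul_ιU_smul g.E11 g.F01, ιU_smul_ιU_smul_of_eq_zero hm.E11_smul,
    ιU_smul_ιU_smul_of_eq_zero hm.E10_smul, neg_add_eq_sub,
    smul_comm (_ : UniversalEnvelopingAlgebra ℂ L) (_ : ℂ)]

lemma E11_sq_smul_F01_smul_F21_smul :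
    ιU g.E11 ^ 2 • ιU g.F01 • ιU g.F21 • m = (6 : ℂ) • ιU g.H01 • m := by
  have hF11 : ιU g.E11 • ιU g.F11 • m = ιU g.H10 • m + (3 : ℂ) • ιU g.H01 • m := by
    rw [ιU_smul_ιU_smul_of_eq_zero hm.E11_smul, lie_E11_F11, H11, ιU_add, add_smul, ιU_smul_smul]
  have hF10 : ιU g.E11 • ιU g.F01 • ιU g.F10 • m = ιU g.H10 • m := by
    simp [ιU_smul_ιU_smul g.E11 g.F01, ιU_smul_ιU_smul_of_eq_zero hm.E11_smul, hm.E01_smul,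
      ιU_smul_ιU_smul_of_eq_zero hm.E10_smul]
  rw [pow_two, mul_smul, hm.E11_smul_F01_smul_F21_smul, smul_sub,
    smul_comm _ (2 : ℂ) (ιU g.F11 • m), hF11, smul_comm _ (2 : ℂ) (ιU g.F01 • _), hF10]
  generalize ιU g.H10 • m = x, ιU g.H01 • m = y
  module

lemma E11_pow_three_smul_F11_smul_F01_smul_F21_smul :
    ιU g.E11 ^ 3 • ιU g.F11 • ιU g.F01 • ιU g.F21 • m
      = (18 : ℂ) • (ιU g.H11 - 2) • ιU g.H01 • m := by
  have hE : ιU g.E11 ^ 3 • ιU g.F01 • ιU g.F21 • m = 0 := by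
    rw [pow_succ', mul_smul, hm.E11_sq_smul_F01_smul_F21_smul, smul_comm, hm.H01_smul.E11_smul,
      smul_zero]
  rw [pow_succ_smul_smul_of_pow_succ_smul_eq_zero (lie_ιU g.lie_E11_F11)
    (lie_ιU_of_lie_eq_two_smul g.lie_H11_E11) hE, hm.E11_sq_smul_F01_smul_F21_smul,
    smul_comm _ (6 : ℂ), ← Nat.cast_smul_eq_nsmul ℂ, smul_smul, Nat.cast_ofNat]
  norm_num

lemma E11_pow_three_smul_F01_smul_F01_smul_F31_smul :
    ιU g.E11 ^ 3 • ιU g.F01 • ιU g.F01 • ιU g.F31 • m = (12 : ℂ) • ιU g.H01 • m := by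
  have h : ιU g.E11 • ιU g.F01 • ιU g.F01 • ιU g.F31 • m
      = (2 : ℂ) • ιU g.F01 • ιU g.F21 • m := by
    simp [ιU_smul_ιU_smul g.E11 g.F01, ιU_smul_ιU_smul_of_eq_zero hm.E11_smul,
      ιU_smul_ιU_smul g.E10 g.F01, ιU_smul_ιU_smul_of_eq_zero hm.E10_smul, two_smul]
  rw [pow_succ, mul_smul, h, smul_comm, hm.E11_sq_smul_F01_smul_F21_smul, smul_smul]
  norm_num

lemma E11_pow_three_smul_F32_smul_F01_smul :
    ιU g.E11 ^ 3 • ιU g.F32 • ιU g.F01 • m = (6 : ℂ) • ιU g.H01 • m := by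
  have h : ιU g.E11 • ιU g.F32 • ιU g.F01 • m = ιU g.F01 • ιU g.F21 • m := by
    simp [ιU_smul_ιU_smul g.E11 g.F32, ιU_smul_ιU_smul_of_eq_zero hm.E11_smul,
      hm.E10_smul, ιU_smul_ιU_smul g.F21 g.F01]
  rw [pow_succ, mul_smul, h, hm.E11_sq_smul_F01_smul_F21_smul]

theorem adU_E11_adU_F32_vU_smul :
    (adU g.E11)^[3] ((adU g.F32)^[3] g.vU) • m
      = ((36 : ℂ) • ((2 / 9 : ℂ) • (ιU g.H11 * (ιU g.H11 - 1) * (ιU g.H11 - 2))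
          + (6 : ℂ) • (ιU g.H01 * ιU g.H32))) • m := by
  have hH : (ιU g.H11 - 2) • ιU g.H01 • m
      = ιU g.H01 • ιU g.H10 • m + (3 : ℂ) • ιU g.H01 • ιU g.H01 • m - (2 : ℂ) • ιU g.H01 • m := by
    have h : ιU g.H10 • ιU g.H01 • m = ιU g.H01 • ιU g.H10 • m := by
      simp [ιU_smul_ιU_smul g.H10 g.H01]
    rw [sub_smul, H11, ιU_add, add_smul, h, ιU_smul_smul, two_smul, two_smul]
  rw [adU_iterate_smul hm.E11_smul, hm.adU_F32_iterate_vU_smul, smul_add, smul_add,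
    smul_comm _ (4 / 3 : ℂ), smul_comm _ (6 : ℂ), smul_comm _ (18 : ℂ), smul_add,
    ιU_pow_three_smul_pow_three_smul g.lie_E11_F11 g.lie_H11_E11 hm.E11_smul,
    hm.E11_pow_three_smul_F11_smul_F01_smul_F21_smul,
    hm.E11_pow_three_smul_F01_smul_F01_smul_F31_smul,
    hm.H31_smul.E11_pow_three_smul_F32_smul_F01_smul, hH, smul_assoc, add_smul,
    smul_assoc, smul_assoc, mul_smul (ιU g.H01)]
  simp only [H31, H32, ιU_add, ιU_smul, add_smul, smul_add, smul_assoc,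
    smul_comm (_ : UniversalEnvelopingAlgebra ℂ L) (_ : ℂ)]
  generalize (ιU g.H11 * (ιU g.H11 - 1) * (ιU g.H11 - 2)) • m = w,
    ιU g.H01 • m = x, ιU g.H01 • ιU g.H10 • m = y, ιU g.H01 • ιU g.H01 • m = z
  module

lemma adU_F21_iterate_vU_smul :
    (adU g.F21)^[6] g.vU • m = (-160 : ℂ) • ιU g.F21 ^ 3 • m
      + (720 : ℂ) • ιU g.F21 • (ιU g.F11 • ιU g.F31 • m - ιU g.F10 • ιU g.F32 • m)
      + (2160 : ℂ) • (ιU g.F31 • ιU g.F31 • ιU g.F01 • m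
        - ιU g.F31 • ιU g.F32 • ιU g.H01 • m) := by
  rw [g.adU_iterate_vU g.isStringEnd_F21_aU g.isStringEnd_F21_bU g.isStringEnd_F21_cU]
  simp only [ιU_smul, smul_pow, sub_smul, add_smul, smul_assoc, mul_smul, hm.E01_smul, smul_zero,
    zero_add, smul_sub, smul_comm (_ : UniversalEnvelopingAlgebra ℂ L) (_ : ℂ)]
  generalize ιU g.F21 ^ 3 • m = v, ιU g.F21 • ιU g.F11 • ιU g.F31 • m = w,
    ιU g.F21 • ιU g.F10 • ιU g.F32 • m = x, ιU g.F31 • ιU g.F32 • ιU g.H01 • m = y,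
    ιU g.F31 • ιU g.F31 • ιU g.F01 • m = z
  simp only [Nat.choose, Nat.reduceAdd, Nat.cast_ofNat]
  module

lemma E21_smul_F11_smul_F31_smul_sub :
    ιU g.E21 • (ιU g.F11 • ιU g.F31 • m - ιU g.F10 • ιU g.F32 • m) = (-2 : ℂ) • ιU g.F21 • m := by
  have h : ιU g.F10 • ιU g.F11 • m = ιU g.F11 • ιU g.F10 • m + (2 : ℂ) • ιU g.F21 • m := by
    rw [ιU_smul_ιU_smul, lie_F10_F11, ιU_smul_smul]
  simp only [smul_sub, ιU_smul_ιU_smul g.E21 g.F11, ιU_smul_ιU_smul g.E21 g.F10,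
    ιU_smul_ιU_smul_of_eq_zero hm.E21_smul, ιU_smul_smul,
    ιU_smul_ιU_smul_of_eq_zero hm.E10_smul, ιU_smul_ιU_smul_of_eq_zero hm.E11_smul, lie_E21_F31,
    lie_E21_F32, lie_E21_F11, lie_E21_F10, lie_E10_F31, lie_E11_F32, ιU_neg, neg_smul, smul_neg, h]
  generalize ιU g.F11 • ιU g.F10 • m = x, ιU g.F21 • m = y
  module

lemma E21_pow_three_smul_F21_smul_sub :
    ιU g.E21 ^ 3 • ιU g.F21 • (ιU g.F11 • ιU g.F31 • m - ιU g.F10 • ιU g.F32 • m)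
      = (-6 : ℂ) • (ιU g.H21 - 2) • ιU g.H21 • m := by
  have h_sq : ιU g.E21 ^ 2 • (ιU g.F11 • ιU g.F31 • m - ιU g.F10 • ιU g.F32 • m)
      = (-2 : ℂ) • ιU g.H21 • m := by
    rw [pow_two, mul_smul, hm.E21_smul_F11_smul_F31_smul_sub, smul_comm,
      ιU_smul_ιU_smul_of_eq_zero hm.E21_smul, lie_E21_F21]
  have h_cube : ιU g.E21 ^ 3 • (ιU g.F11 • ιU g.F31 • m - ιU g.F10 • ιU g.F32 • m) = 0 := by
    rw [pow_succ', mul_smul, h_sq, smul_comm, hm.H21_smul.E21_smul, smul_zero]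
  rw [pow_succ_smul_smul_of_pow_succ_smul_eq_zero (lie_ιU g.lie_E21_F21)
    (lie_ιU_of_lie_eq_two_smul g.lie_H21_E21) h_cube, h_sq, smul_comm _ (-2 : ℂ),
    ← Nat.cast_smul_eq_nsmul ℂ, smul_smul]
  norm_num

lemma E21_pow_three_smul_F31_smul_F32_smul :
    ιU g.E21 ^ 3 • ιU g.F31 • ιU g.F32 • m = (6 : ℂ) • ιU g.H01 • m := by
  have hF31F32 : ιU g.E21 • ιU g.F31 • ιU g.F32 • m
      = -(ιU g.F10 • ιU g.F32 • m + ιU g.F31 • ιU g.F11 • m) := by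
    simp [ιU_smul_ιU_smul g.E21 g.F31, ιU_smul_ιU_smul_of_eq_zero hm.E21_smul, add_comm]
  have hF10F32_add : ιU g.E21 • (ιU g.F10 • ιU g.F32 • m + ιU g.F31 • ιU g.F11 • m)
      = (2 : ℂ) • (ιU g.F21 • m - ιU g.F10 • ιU g.F11 • m) := by
    simp only [smul_add, ιU_smul_ιU_smul g.E21 g.F10, ιU_smul_ιU_smul_of_eq_zero hm.E21_smul,
      lie_E21_F32, ιU_neg, neg_smul, smul_neg, lie_E21_F10, ιU_smul, smul_assoc,
      ιU_smul_ιU_smul_of_eq_zero hm.E11_smul, lie_E11_F32, ιU_smul_ιU_smul g.E21 g.F31, lie_E21_F11,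
      hm.E10_smul, smul_zero, neg_zero, lie_E21_F31, zero_add]
    generalize ιU g.F10 • ιU g.F11 • m = x, ιU g.F21 • m = y
    module
  have hF10F11 : ιU g.E21 • ιU g.F10 • ιU g.F11 • m = (2 : ℂ) • ιU g.H11 • m := by
    simp [ιU_smul_ιU_smul g.E21 g.F10, ιU_smul_ιU_smul_of_eq_zero hm.E21_smul,
      ιU_smul_ιU_smul_of_eq_zero hm.E11_smul, hm.E10_smul]
  rw [pow_three, mul_smul, mul_smul, hF31F32, smul_neg, hF10F32_add, smul_neg, smul_comm, smul_sub,
    hF10F11, ιU_smul_ιU_smul_of_eq_zero hm.E21_smul, lie_E21_F21, H21, H11]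
  simp only [ιU_add, add_smul, ιU_smul_smul]
  generalize ιU g.H10 • m = x, ιU g.H01 • m = y
  module

lemma E21_pow_three_smul_F31_smul_F31_smul_F01_smul :
    ιU g.E21 ^ 3 • ιU g.F31 • ιU g.F31 • ιU g.F01 • m = (-12 : ℂ) • ιU g.H01 • m := by
  have hF10F31 : ιU g.F10 • ιU g.F31 • ιU g.F01 • m = ιU g.F31 • ιU g.F10 • ιU g.F01 • m := by
    simp [ιU_smul_ιU_smul g.F10 g.F31]
  have hF31F31 : ιU g.E21 • ιU g.F31 • ιU g.F31 • ιU g.F01 • m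
      = (-2 : ℂ) • ιU g.F31 • ιU g.F10 • ιU g.F01 • m := by
    simp only [ιU_smul_ιU_smul g.E21 g.F31, ιU_smul_ιU_smul_of_eq_zero hm.E21_smul, lie_E21_F01,
      ιU_zero, zero_smul, smul_zero, lie_E21_F31, ιU_neg, neg_smul, zero_add, smul_neg, hF10F31]
    generalize ιU g.F31 • ιU g.F10 • ιU g.F01 • m = x
    module
  have hF31F10 : ιU g.E21 • ιU g.F31 • ιU g.F10 • ιU g.F01 • m
      = -(ιU g.F10 • ιU g.F10 • ιU g.F01 • m) := by
    simp [ιU_smul_ιU_smul g.E21 g.F31, ιU_smul_ιU_smul g.E21 g.F10,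
      ιU_smul_ιU_smul_of_eq_zero hm.E21_smul, ιU_smul_ιU_smul_of_eq_zero hm.E11_smul, hm.E10_smul]
  have hF10F10 : ιU g.E21 • ιU g.F10 • ιU g.F10 • ιU g.F01 • m = (-6 : ℂ) • ιU g.H01 • m := by
    simp only [ιU_smul_ιU_smul g.E21 g.F10, ιU_smul_ιU_smul_of_eq_zero hm.E21_smul, lie_E21_F01,
      ιU_zero, zero_smul, smul_zero, lie_E21_F10, ιU_smul, smul_assoc, ιU_smul_ιU_smul_of_eq_zero
      hm.E11_smul, lie_E11_F01, hm.E10_smul, add_zero, ιU_smul_ιU_smul g.E11 g.F10, lie_E11_F10,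
      neg_smul, ιU_neg, ιU_smul_ιU_smul_of_eq_zero hm.E01_smul, hE01F01, zero_add, smul_neg,
      neg_inj]
    generalize ιU g.H01 • m = x
    module
  rw [pow_three, mul_smul, mul_smul, hF31F31, smul_comm _ (-2 : ℂ), hF31F10, smul_comm _ (-2 : ℂ),
    smul_neg, hF10F10]
  generalize ιU g.H01 • m = x
  module

theorem adU_E21_adU_F21_vU_smul :
    (adU g.E21)^[3] ((adU g.F21)^[6] g.vU) • m
      = ((-4320 : ℂ) • ((2 / 9 : ℂ) • (ιU g.H21 * (ιU g.H21 - 1) * (ιU g.H21 - 2))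
          + ιU g.H21 * (ιU g.H21 - 2) + (3 : ℂ) • (ιU g.H01 * (ιU g.H01 + 2)))) • m := by
  have hH21 : (ιU g.H21 * (ιU g.H21 - 2)) • m = (ιU g.H21 - 2) • ιU g.H21 • m := by
    rw [← mul_smul, ((Commute.refl _).sub_right (Commute.ofNat_right _ 2)).eq]
  have hH01 : (ιU g.H01 * (ιU g.H01 + 2)) • m
      = ιU g.H01 • ιU g.H01 • m + (2 : ℂ) • ιU g.H01 • m := by
    rw [mul_smul, add_smul, smul_add, two_smul, two_smul, smul_add]
  rw [adU_iterate_smul hm.E21_smul, hm.adU_F21_iterate_vU_smul, smul_add, smul_add,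
    smul_comm _ (-160 : ℂ), smul_comm _ (720 : ℂ), smul_comm _ (2160 : ℂ), smul_sub (ιU _ ^ 3),
    ιU_pow_three_smul_pow_three_smul g.lie_E21_F21 g.lie_H21_E21 hm.E21_smul,
    hm.E21_pow_three_smul_F21_smul_sub, hm.E21_pow_three_smul_F31_smul_F31_smul_F01_smul,
    hm.H01_smul.E21_pow_three_smul_F31_smul_F32_smul, smul_assoc, add_smul, add_smul,
    smul_assoc, smul_assoc, hH01, hH21]
  generalize (ιU g.H21 * (ιU g.H21 - 1) * (ιU g.H21 - 2)) • m = w,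
    (ιU g.H21 - 2) • ιU g.H21 • m = x, ιU g.H01 • m = y, ιU g.H01 • ιU g.H01 • m = z
  module

end IsSingular

/-- The quotient module `U(𝔤) / U(𝔤)𝔫₊`, generated by the class of `1`, which is the universal
singular vector. -/
abbrev SingularQuotient : Type _ :=
  UniversalEnvelopingAlgebra ℂ L ⧸
    Submodule.span (UniversalEnvelopingAlgebra ℂ L) {ιU g.E10, ιU g.E01}

lemma isSingular_mk_one : g.IsSingular (Submodule.Quotient.mk 1 : g.SingularQuotient) where
  E10_smul := by
    rw [← Submodule.Quotient.mk_smul, smul_eq_mul, mul_one, Submodule.Quotient.mk_eq_zero]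
    exact Submodule.subset_span (by simp)
  E01_smul := by
    rw [← Submodule.Quotient.mk_smul, smul_eq_mul, mul_one, Submodule.Quotient.mk_eq_zero]
    exact Submodule.subset_span (by simp)

lemma eqModN_of_forall_isSingular {f h : UniversalEnvelopingAlgebra ℂ L}
    (H : ∀ m : g.SingularQuotient, g.IsSingular m → f • m = h • m) : g.EqModN f h := by
  have hmk := H _ g.isSingular_mk_one
  rw [← Submodule.Quotient.mk_smul, ← Submodule.Quotient.mk_smul, Submodule.Quotient.eq,
    smul_eq_mul, smul_eq_mul, mul_one, mul_one, Submodule.mem_span_pair] at hmk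
  obtain ⟨A, B, hAB⟩ := hmk
  exact ⟨A, B, hAB.symm⟩

end G2Gens

/-- **Lemma 3.4 (lem-second-case).**  With `v = (2/9)a³ − ab − 3c` (the image under Zhu's map
of the singular vector of `N(−4/3, 0)` of type `G₂⁽¹⁾`), the polynomials `q`, `p₁`, `p₂` of
Lemma 3.4 arise, up to nonzero rational constants, from `v` modulo `U(𝔤)𝔫₊`. -/
theorem G2Gens.level_minus_four_thirds_polynomials
    {L : Type*} [LieRing L] [LieAlgebra ℂ L] (g : G2Gens L) :
    ∃ C C₁ C₂ : ℚ, C ≠ 0 ∧ C₁ ≠ 0 ∧ C₂ ≠ 0 ∧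
      g.EqModN ((adU g.E21)^[3] ((adU g.F21)^[6] g.vU))
        ((C : ℂ) • (((2 : ℂ) / 9) • (ιU g.H21 * (ιU g.H21 - 1) * (ιU g.H21 - 2))
          + ιU g.H21 * (ιU g.H21 - 2)
          + (3 : ℂ) • (ιU g.H01 * (ιU g.H01 + 2)))) ∧
      g.EqModN ((adU g.E10)^[3] ((adU g.F31)^[3] g.vU))
        ((C₁ : ℂ) • (ιU g.H10 * (ιU g.H10 - 1) * (ιU g.H10 - 2))) ∧
      g.EqModN ((adU g.E11)^[3] ((adU g.F32)^[3] g.vU))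
        ((C₂ : ℂ) • (((2 : ℂ) / 9) • (ιU g.H11 * (ιU g.H11 - 1) * (ιU g.H11 - 2))
          + (6 : ℂ) • (ιU g.H01 * ιU g.H32))) := by
  refine ⟨-4320, 8, 36, by norm_num, by norm_num, by norm_num, ?_, ?_, ?_⟩ <;> push_cast
  · exact g.eqModN_of_forall_isSingular fun _ hm ↦ hm.adU_E21_adU_F21_vU_smul
  · exact g.eqModN_of_forall_isSingular fun _ hm ↦ hm.adU_E10_adU_F31_vU_smul
  · exact g.eqModN_of_forall_isSingular fun _ hm ↦ hm.adU_E11_adU_F32_vU_smul
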